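/- arXiv:math/0512053 — 2 statements merged into one kernel-verified Lean document; each statement's English description precedes it below -/
import Mathlib

section
/- Let g : ℝ → ℝ be real-analytic, odd, 2π-periodic, not identically zero, and satisfy g'' + A(g)(3⟨g²⟩ g + g³) = 0 on ℝ, where A(g) := ⟨g⁴⟩ + 3⟨g²⟩². Let v̄ be the solution of h'' + 3A(g)(⟨g²⟩ + g²)h = 0 with v̄(0) = 0, v̄'(0) = 1, and let ρ > 0 satisfy v̄(t + 2π) − v̄(t) = ρ g'(t)/g'(0) for all t. If H : ℝ → ℝ is C², odd, 2π-periodic and satisfies H'' + 3A(g)(⟨g²⟩ + g²)H = g on ℝ, then ⟨g H⟩ = ρ/(4π A(g)) + (1/(2πρ))(∫₀^{2π} g(t) v̄(t) dt)², and in particular ⟨g H⟩ > 0. -/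
open Real

/-- Average of a function over one period `[0, 2π]`. -/
noncomputable def avg (f : ℝ → ℝ) : ℝ := (1 / (2 * π)) * ∫ t in (0:ℝ)..(2 * π), f t

/-!
Put `L x = x'' + (α + 3 β g²) x`, the linearization at a solution `g` of the Duffing equation
`g'' + α g + β g³ = 0`. Then `L g' = 0`, `L v = 0`, `L g = 2 β g³` and `L H = g`. In the identity
`H W(v, g') = v W(H, g') - g' W(H, v)` the Wronskian `W(v, g')` is constant and
`W(H, g') = -g² / 2 + const`, so multiplying by `g` and integrating `g g' W(H, v)` by parts
expresses `∫ g H` over a period through `∫ g³ v` and `∫ g v`. Both are boundary terms by Lagrange's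
identity, applied to the pairs `(g, v)` and `(H, v)`.
-/

/-- `x` is a classical solution of `x'' + q x = f`, the forced Hill equation (with `q` not assumed
periodic). The second derivative is recorded by `HasDerivAt`, so that it is not a junk value. -/
structure IsHillSolution (q f x : ℝ → ℝ) : Prop where
  differentiable : Differentiable ℝ x
  hasDerivAt_deriv : ∀ t, HasDerivAt (deriv x) (f t - q t * x t) t

/-- The Wronskian `x y' - x' y`. -/
noncomputable def wronskian (x y : ℝ → ℝ) (t : ℝ) : ℝ := x t * deriv y t - deriv x t * y t

theorem mul_wronskian_eq_sub (x y z : ℝ → ℝ) (t : ℝ) :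
    x t * wronskian y z t = y t * wronskian x z t - z t * wronskian x y t := by
  unfold wronskian
  ring

namespace IsHillSolution

variable {q f f₁ f₂ x x₁ x₂ : ℝ → ℝ}

theorem of_contDiff_two (hx : ContDiff ℝ 2 x) (h : ∀ t, deriv (deriv x) t + q t * x t = f t) :
    IsHillSolution q f x where
  differentiable := hx.differentiable two_ne_zero
  hasDerivAt_deriv t :=
    (hx.differentiable_deriv_two t).hasDerivAt.congr_deriv (eq_sub_of_add_eq (h t))

theorem hasDerivAt (hx : IsHillSolution q f x) (t : ℝ) : HasDerivAt x (deriv x t) t :=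
  (hx.differentiable t).hasDerivAt

theorem continuous (hx : IsHillSolution q f x) : Continuous x :=
  hx.differentiable.continuous

theorem deriv_deriv (hx : IsHillSolution q f x) (t : ℝ) :
    deriv (deriv x) t = f t - q t * x t :=
  (hx.hasDerivAt_deriv t).deriv

theorem hasDerivAt_wronskian (hx₁ : IsHillSolution q f₁ x₁) (hx₂ : IsHillSolution q f₂ x₂) (t : ℝ) :
    HasDerivAt (wronskian x₁ x₂) (x₁ t * f₂ t - f₁ t * x₂ t) t :=
  (((hx₁.hasDerivAt t).mul (hx₂.hasDerivAt_deriv t)).sub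
    ((hx₁.hasDerivAt_deriv t).mul (hx₂.hasDerivAt t))).congr_deriv (by ring)

theorem integral_eq_wronskian_sub (hx₁ : IsHillSolution q f₁ x₁) (hx₂ : IsHillSolution q f₂ x₂)
    (hf₁ : Continuous f₁) (hf₂ : Continuous f₂) (a b : ℝ) :
    ∫ t in a..b, (x₁ t * f₂ t - f₁ t * x₂ t) = wronskian x₁ x₂ b - wronskian x₁ x₂ a :=
  intervalIntegral.integral_eq_sub_of_hasDerivAt (fun t _ => hx₁.hasDerivAt_wronskian hx₂ t)
    (((hx₁.continuous.mul hf₂).sub (hf₁.mul hx₂.continuous)).intervalIntegrable a b)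

theorem wronskian_eq (hx₁ : IsHillSolution q 0 x₁) (hx₂ : IsHillSolution q 0 x₂) (s t : ℝ) :
    wronskian x₁ x₂ s = wronskian x₁ x₂ t := by
  have hW r : HasDerivAt (wronskian x₁ x₂) 0 r := by
    simpa using hx₁.hasDerivAt_wronskian hx₂ r
  exact is_const_of_deriv_eq_zero (fun r => (hW r).differentiableAt) (fun r => (hW r).deriv) s t

theorem eq_zero_of_initial_eq_zero (hx : IsHillSolution q 0 x) (hq : Continuous q) {t₀ : ℝ}
    (h₀ : x t₀ = 0) (h₀' : deriv x t₀ = 0) : x = 0 := by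
  funext t
  obtain ⟨a, b, ht, ht₀⟩ : ∃ a b, t ∈ Set.Ioo a b ∧ t₀ ∈ Set.Ioo a b :=
    ⟨min t t₀ - 1, max t t₀ + 1, by grind⟩
  obtain ⟨C, hC⟩ := isCompact_Icc.exists_bound_of_continuousOn (s := Set.Icc a b) hq.continuousOn
  let field (s : ℝ) (p : ℝ × ℝ) : ℝ × ℝ := (p.2, -q s * p.1)
  have lipschitz : ∀ s ∈ Set.Ioo a b,
      LipschitzOnWith (max 1 C.toNNReal) (field s) Set.univ := by
    intro s hs
    have hqs : ‖-q s‖₊ * 1 ≤ C.toNNReal := by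
      rw [mul_one, nnnorm_neg, ← norm_toNNReal]
      exact Real.toNNReal_le_toNNReal (hC s (Set.Ioo_subset_Icc_self hs))
    exact (LipschitzWith.prod_snd.prodMk
      (((lipschitzWith_smul (-q s)).comp LipschitzWith.prod_fst).weaken hqs)).lipschitzOnWith
  have solution s : HasDerivAt (fun r => (x r, deriv x r)) (field s (x s, deriv x s)) s :=
    (hx.hasDerivAt s).prodMk (by simpa using hx.hasDerivAt_deriv s)
  have trivial_solution s : HasDerivAt (fun _ => (0 : ℝ × ℝ)) (field s 0) s :=
    (hasDerivAt_const s _).congr_deriv (by ext <;> simp [field])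
  have unique := ODE_solution_unique_of_mem_Ioo lipschitz ht₀
    (fun s _ => ⟨solution s, Set.mem_univ _⟩) (fun s _ => ⟨trivial_solution s, Set.mem_univ _⟩)
    (Prod.ext h₀ h₀') ht
  exact congrArg Prod.fst unique

end IsHillSolution

theorem periodic_deriv {𝕜 F : Type*} [NontriviallyNormedField 𝕜] [NormedAddCommGroup F]
    [NormedSpace 𝕜 F] {f : 𝕜 → F} {T : 𝕜} (hf : Function.Periodic f T) :
    Function.Periodic (deriv f) T := fun t => by
  rw [← deriv_comp_add_const f T t, funext hf]

/-- `g` is a classical solution of the Duffing equation `g'' + α g + β g³ = 0`, written as a Hill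
equation with potential `α + β g²`. -/
def IsDuffingSolution (α β : ℝ) (g : ℝ → ℝ) : Prop :=
  IsHillSolution (fun t => α + β * g t ^ 2) 0 g

/-- The potential of the linearization of the Duffing equation along `g`. -/
def duffingPotential (α β : ℝ) (g : ℝ → ℝ) (t : ℝ) : ℝ := α + 3 * β * g t ^ 2

namespace IsDuffingSolution

variable {α β T : ℝ} {g v H : ℝ → ℝ}

theorem isHillSolution_self (hg : IsDuffingSolution α β g) :
    IsHillSolution (duffingPotential α β g) (fun t => 2 * β * g t ^ 3) g where
  differentiable := hg.differentiable
  hasDerivAt_deriv t := (hg.hasDerivAt_deriv t).congr_deriv <| by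
    simp only [duffingPotential, Pi.zero_apply]
    ring

theorem isHillSolution_deriv (hg : IsDuffingSolution α β g) :
    IsHillSolution (duffingPotential α β g) 0 (deriv g) where
  differentiable t := (hg.hasDerivAt_deriv t).differentiableAt
  hasDerivAt_deriv t := by
    have hg't := hg.hasDerivAt t
    have deriv2 : deriv (deriv g) = fun s => -(α * g s + β * g s ^ 3) := by
      funext s
      simp only [hg.deriv_deriv s, Pi.zero_apply]
      ring
    rw [deriv2]
    refine ((hg't.const_mul α).add ((hg't.pow 3).const_mul β)).neg.congr_deriv ?_
    simp only [duffingPotential, Pi.zero_apply]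
    push_cast
    ring

theorem deriv_deriv_eq_zero_of_eq_zero (hg : IsDuffingSolution α β g) {t : ℝ} (ht : g t = 0) :
    deriv (deriv g) t = 0 := by
  simp [hg.deriv_deriv, ht]

theorem deriv_ne_zero (hg : IsDuffingSolution α β g) (hne : g ≠ 0) {t : ℝ} (ht : g t = 0) :
    deriv g t ≠ 0 := fun h =>
  hne (hg.eq_zero_of_initial_eq_zero (by have := hg.continuous; fun_prop) ht h)

theorem wronskian_deriv_of_eq_zero (hg : IsDuffingSolution α β g) {x : ℝ → ℝ} {t : ℝ}
    (ht : g t = 0) : wronskian x (deriv g) t = -(deriv x t * deriv g t) := by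
  simp [wronskian, hg.deriv_deriv_eq_zero_of_eq_zero ht]

theorem wronskian_deriv_add_half_sq_eq (hg : IsDuffingSolution α β g)
    (hH : IsHillSolution (duffingPotential α β g) g H) (s t : ℝ) :
    wronskian H (deriv g) s + g s ^ 2 / 2 = wronskian H (deriv g) t + g t ^ 2 / 2 := by
  have h r : HasDerivAt (fun r => wronskian H (deriv g) r + g r ^ 2 / 2) 0 r :=
    ((hH.hasDerivAt_wronskian hg.isHillSolution_deriv r).add
      (((hg.hasDerivAt r).pow 2).div_const 2)).congr_deriv
        (by simp only [Pi.zero_apply]; push_cast; ring)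
  exact is_const_of_deriv_eq_zero (fun r => (h r).differentiableAt) (fun r => (h r).deriv) s t

theorem integral_cube_mul (hg : IsDuffingSolution α β g) (hg0 : g 0 = 0)
    (hper : Function.Periodic g T) (hv : IsHillSolution (duffingPotential α β g) 0 v)
    (hv0 : v 0 = 0) : 2 * β * ∫ t in 0..T, g t ^ 3 * v t = deriv g 0 * v T := by
  have hgc := hg.continuous
  have lagrange := hg.isHillSolution_self.integral_eq_wronskian_sub hv (by fun_prop)
    continuous_zero 0 T
  simp only [wronskian, Pi.zero_apply, mul_zero, zero_sub, intervalIntegral.integral_neg,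
    hper.eq, (periodic_deriv hper).eq, hv0, hg0, zero_mul, mul_assoc,
    intervalIntegral.integral_const_mul] at lagrange
  linear_combination -lagrange

section Fundamental

variable (hg : IsDuffingSolution α β g) (hg0 : g 0 = 0)
  (hv : IsHillSolution (duffingPotential α β g) 0 v) (hv0' : deriv v 0 = 1)
include hg hg0 hv hv0'

theorem wronskian_deriv_fundamental (t : ℝ) : wronskian v (deriv g) t = -deriv g 0 := by
  rw [hv.wronskian_eq hg.isHillSolution_deriv t 0, hg.wronskian_deriv_of_eq_zero hg0, hv0', one_mul]

theorem variation_of_parameters (hH : IsHillSolution (duffingPotential α β g) g H) (t : ℝ) :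
    deriv g 0 * H t = deriv g t * wronskian H v t
      + (g t ^ 2 / 2 + deriv H 0 * deriv g 0) * v t := by
  have hHg := hg.wronskian_deriv_add_half_sq_eq hH t 0
  rw [hg.wronskian_deriv_of_eq_zero hg0, hg0] at hHg
  have expansion := mul_wronskian_eq_sub H v (deriv g) t
  rw [hg.wronskian_deriv_fundamental hg0 hv hv0'] at expansion
  linear_combination -expansion - v t * hHg

theorem hasDerivAt_sq_mul_wronskian (hH : IsHillSolution (duffingPotential α β g) g H) (t : ℝ) :
    HasDerivAt (fun s => g s ^ 2 / 2 * wronskian H v s)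
      (deriv g 0 * (g t * H t)
        - (g t ^ 3 * v t + deriv H 0 * deriv g 0 * (g t * v t))) t := by
  refine ((((hg.hasDerivAt t).pow 2).div_const 2).mul (hH.hasDerivAt_wronskian hv t)).congr_deriv ?_
  simp only [Pi.pow_apply, Pi.zero_apply]
  push_cast
  linear_combination -g t * hg.variation_of_parameters hg0 hv hv0' hH t

variable (hper : Function.Periodic g T)
include hper

theorem deriv_fundamental_eq_one (hne : g ≠ 0) : deriv v T = 1 := by
  have hgT : g T = 0 := by rw [hper.eq, hg0]
  have hW := hg.wronskian_deriv_fundamental hg0 hv hv0' T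
  rw [hg.wronskian_deriv_of_eq_zero hgT, (periodic_deriv hper).eq, neg_inj] at hW
  exact mul_right_cancel₀ (hg.deriv_ne_zero hne hg0) (hW.trans (one_mul _).symm)

theorem integral_mul_fundamental (hne : g ≠ 0) (hv0 : v 0 = 0)
    (hH : IsHillSolution (duffingPotential α β g) g H) (hHper : Function.Periodic H T) :
    ∫ t in 0..T, g t * v t = deriv H 0 * v T := by
  have lagrange := hH.integral_eq_wronskian_sub hv hg.continuous continuous_zero 0 T
  simp only [wronskian, Pi.zero_apply, mul_zero, zero_sub, intervalIntegral.integral_neg,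
    hHper.eq, (periodic_deriv hHper).eq, hv0, hv0',
    hg.deriv_fundamental_eq_one hg0 hv hv0' hper hne] at lagrange
  linear_combination -lagrange

theorem deriv_zero_mul_integral_mul (hH : IsHillSolution (duffingPotential α β g) g H) :
    deriv g 0 * ∫ t in 0..T, g t * H t =
      (∫ t in 0..T, g t ^ 3 * v t) + deriv H 0 * deriv g 0 * ∫ t in 0..T, g t * v t := by
  have hgc := hg.continuous
  have hvc := hv.continuous
  have hHc := hH.continuous
  have integrable {f : ℝ → ℝ} (hf : Continuous f) : IntervalIntegrable f MeasureTheory.volume 0 T :=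
    hf.intervalIntegrable 0 T
  have ftc := intervalIntegral.integral_eq_sub_of_hasDerivAt
    (fun t _ => hg.hasDerivAt_sq_mul_wronskian hg0 hv hv0' hH t) (integrable (by fun_prop))
  rw [intervalIntegral.integral_sub (integrable (by fun_prop)) (integrable (by fun_prop)),
    intervalIntegral.integral_add (integrable (by fun_prop)) (integrable (by fun_prop)),
    intervalIntegral.integral_const_mul, intervalIntegral.integral_const_mul, hper.eq, hg0] at ftc
  linear_combination ftc

theorem integral_mul (hne : g ≠ 0) (hβ : β ≠ 0) (hv0 : v 0 = 0)
    (hH : IsHillSolution (duffingPotential α β g) g H) (hHper : Function.Periodic H T) :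
    ∫ t in 0..T, g t * H t = v T * (1 / (2 * β) + deriv H 0 ^ 2) := by
  have hsplit := hg.deriv_zero_mul_integral_mul hg0 hv hv0' hper hH
  rw [hg.integral_mul_fundamental hg0 hv hv0' hper hne hv0 hH hHper] at hsplit
  have hcube := hg.integral_cube_mul hg0 hper hv hv0
  refine mul_left_cancel₀ (hg.deriv_ne_zero hne hg0) ?_
  rw [hsplit]
  field_simp
  linear_combination hcube

end Fundamental

end IsDuffingSolution

theorem avg_even_pow_pos {f : ℝ → ℝ} (hf : Continuous f) (hper : Function.Periodic f (2 * π))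
    (hne : f ≠ 0) {n : ℕ} (hn : Even n) : 0 < avg (fun s => f s ^ n) := by
  obtain ⟨x, hx⟩ := Function.ne_iff.mp hne
  obtain ⟨y, hy, hxy⟩ := hper.exists_mem_Ico₀ (by positivity) x
  refine mul_pos (by positivity) (intervalIntegral.integral_pos (by positivity)
    (hf.pow n).continuousOn (fun t _ => hn.pow_nonneg _) ⟨y, Set.Ico_subset_Icc_self hy, ?_⟩)
  exact hn.pow_pos (hxy ▸ hx)

theorem stmt_5_general {g v H : ℝ → ℝ} {A m L ρ : ℝ} (hL : 0 < L) (hA : 0 < A)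
    (hg : ContDiff ℝ 2 g) (hg0 : g 0 = 0) (hper : Function.Periodic g (2 * L)) (hne : g ≠ 0)
    (hode : ∀ t, deriv (deriv g) t + A * (3 * m * g t + g t ^ 3) = 0)
    (hv : ContDiff ℝ 2 v) (hvode : ∀ t, deriv (deriv v) t + 3 * A * (m + g t ^ 2) * v t = 0)
    (hv0 : v 0 = 0) (hv0' : deriv v 0 = 1) (hρ : 0 < ρ)
    (hρv : ∀ t, v (t + 2 * L) - v t = ρ * (deriv g t / deriv g 0))
    (hH : ContDiff ℝ 2 H) (hHper : Function.Periodic H (2 * L))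
    (hHode : ∀ t, deriv (deriv H) t + 3 * A * (m + g t ^ 2) * H t = g t) :
    1 / (2 * L) * (∫ t in 0..2 * L, g t * H t)
        = ρ / (4 * L * A) + 1 / (2 * L * ρ) * (∫ t in 0..2 * L, g t * v t) ^ 2 ∧
      0 < 1 / (2 * L) * ∫ t in 0..2 * L, g t * H t := by
  have hpot t : duffingPotential (3 * A * m) A g t = 3 * A * (m + g t ^ 2) := by
    unfold duffingPotential
    ring
  have hg : IsDuffingSolution (3 * A * m) A g :=
    .of_contDiff_two hg fun t => by
      rw [Pi.zero_apply]
      linear_combination hode t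
  have hv : IsHillSolution (duffingPotential (3 * A * m) A g) 0 v :=
    .of_contDiff_two hv fun t => (hpot t).symm ▸ hvode t
  have hH : IsHillSolution (duffingPotential (3 * A * m) A g) g H :=
    .of_contDiff_two hH fun t => (hpot t).symm ▸ hHode t
  have hvL : v (2 * L) = ρ := by simpa [hv0, hg.deriv_ne_zero hne hg0] using hρv 0
  rw [hg.integral_mul hg0 hv hv0' hper hne hA.ne' hv0 hH hHper,
    hg.integral_mul_fundamental hg0 hv hv0' hper hne hv0 hH hHper, hvL]
  exact ⟨by field_simp; ring, by positivity⟩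

theorem stmt_5 (g : ℝ → ℝ)
    (han : ∀ t : ℝ, AnalyticAt ℝ g t)
    (hodd : ∀ t : ℝ, g (-t) = -g t)
    (hper : Function.Periodic g (2 * π))
    (hne : g ≠ 0)
    (A : ℝ) (hA : A = avg (fun s => g s ^ 4) + 3 * avg (fun s => g s ^ 2) ^ 2)
    (hode : ∀ t : ℝ, deriv (deriv g) t
        + A * (3 * avg (fun s => g s ^ 2) * g t + g t ^ 3) = 0)
    (v : ℝ → ℝ) (hv : ContDiff ℝ 2 v)
    (hvode : ∀ t : ℝ, deriv (deriv v) t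
        + 3 * A * (avg (fun s => g s ^ 2) + g t ^ 2) * v t = 0)
    (hv0 : v 0 = 0) (hv0' : deriv v 0 = 1)
    (ρ : ℝ) (hρ : 0 < ρ)
    (hρv : ∀ t : ℝ, v (t + 2 * π) - v t = ρ * (deriv g t / deriv g 0))
    (H : ℝ → ℝ) (hH : ContDiff ℝ 2 H) (hHodd : ∀ t : ℝ, H (-t) = -H t)
    (hHper : Function.Periodic H (2 * π))
    (hHode : ∀ t : ℝ, deriv (deriv H) t
        + 3 * A * (avg (fun s => g s ^ 2) + g t ^ 2) * H t = g t) :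
    avg (fun s => g s * H s)
        = ρ / (4 * π * A) + (1 / (2 * π * ρ)) * (∫ t in (0:ℝ)..(2 * π), g t * v t) ^ 2 ∧
      0 < avg (fun s => g s * H s) := by
  have hg : ContDiff ℝ 2 g := contDiff_iff_contDiffAt.mpr fun t => (han t).contDiffAt
  have hA_pos : 0 < A := hA ▸ add_pos_of_pos_of_nonneg
    (avg_even_pow_pos hg.continuous hper hne (by decide)) (by positivity)
  exact stmt_5_general pi_pos hA_pos hg (Function.Odd.map_zero hodd) hper hne hode hv hvode hv0 hv0'
    hρ hρv hH hHper hHode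
end

section
/- There exist constants V > 0, Ω > 0 and m ∈ (−1, 0) such that the function g(t) := V·sn(Ωt, m) is odd, 2π-periodic with minimal period 2π, and satisfies for all t ∈ ℝ the equation g''(t) + A(g)(3⟨g²⟩ g(t) + g(t)³) = 0, where A(g) := ⟨g⁴⟩ + 3⟨g²⟩². -/
open Real

/-- Incomplete elliptic integral of the first kind `F(φ, m)`. -/
noncomputable def Fm (m φ : ℝ) : ℝ := ∫ θ in (0:ℝ)..φ, 1 / Real.sqrt (1 - m * Real.sin θ ^ 2)

/-- The Jacobi elliptic sine `sn(t, m) = sin(F_m⁻¹(t))`. -/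
noncomputable def sn (t m : ℝ) : ℝ := Real.sin (Function.invFun (Fm m) t)

/-!
Since `sn'' = -(1 + m) sn + 2 m sn³`, the function `g(t) = V sn(Ω t, m)` with `Ω = 4 K(m) / (2 π)`
has period `2 π` and solves a cubic oscillator equation. Comparing coefficients, and writing
`⟨sn ^ k⟩` for the mean over a period of `sn`, the equation for `g` reduces to
`1 + m + 6 m ⟨sn²⟩ = 0` (linear term) and `V⁶ (⟨sn⁴⟩ + 3 ⟨sn²⟩²) = -2 m Ω²` (cubic term).
The first involves `m` alone, and its left side changes sign between `m = -1` and `m = 0`; for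
`m < 0` the second then determines `V > 0`.
-/

/-- Legendre's `Δ(φ, m) = √(1 - m sin² φ)`, the reciprocal of the integrand of `Fm m`. -/
noncomputable def legendreDelta (m φ : ℝ) : ℝ := √(1 - m * sin φ ^ 2)

/-- The Jacobi amplitude `am(t, m)`, the inverse of the elliptic integral `Fm m` (a junk value of
`Function.invFun` where `Fm m` is not bijective); the arguments are ordered as in `sn`. -/
noncomputable def am (t m : ℝ) : ℝ := Function.invFun (Fm m) t

/-- The Jacobi elliptic cosine `cn(t, m) = cos(am(t, m))`. -/
noncomputable def cn (t m : ℝ) : ℝ := cos (am t m)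

/-- The Jacobi delta amplitude `dn(t, m) = Δ(am(t, m), m)`. -/
noncomputable def dn (t m : ℝ) : ℝ := legendreDelta m (am t m)

/-- The period `4 K(m)` of `sn(·, m)`, where `K(m) = F(π / 2, m)` is the complete elliptic integral
of the first kind, encoded as `F(2 π, m)`. -/
noncomputable def snPeriod (m : ℝ) : ℝ := Fm m (2 * π)

/-- The angular frequency `Ω` for which `sn(Ω t, m)` has period `2 π`. -/
noncomputable def snFrequency (m : ℝ) : ℝ := snPeriod m / (2 * π)

/-- The mean of `sn(·, m) ^ k` over one period. -/
noncomputable def snMean (k : ℕ) (m : ℝ) : ℝ :=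
  (∫ t in (0 : ℝ)..snPeriod m, sn t m ^ k) / snPeriod m

section

variable {m : ℝ}

lemma one_sub_mul_sin_sq_pos (hm : m < 1) (φ : ℝ) : 0 < 1 - m * sin φ ^ 2 := by
  rcases le_or_gt m 0 with hm₀ | hm₀
  · nlinarith [sq_nonneg (sin φ)]
  · nlinarith [sin_sq_le_one φ]

lemma legendreDelta_pos (hm : m < 1) (φ : ℝ) : 0 < legendreDelta m φ :=
  sqrt_pos.mpr (one_sub_mul_sin_sq_pos hm φ)

lemma sq_legendreDelta (hm : m < 1) (φ : ℝ) : legendreDelta m φ ^ 2 = 1 - m * sin φ ^ 2 :=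
  sq_sqrt (one_sub_mul_sin_sq_pos hm φ).le

@[fun_prop]
lemma continuous_uncurry_legendreDelta : Continuous fun p : ℝ × ℝ => legendreDelta p.1 p.2 := by
  unfold legendreDelta
  fun_prop

lemma continuous_legendreDelta (m : ℝ) : Continuous (legendreDelta m) := by
  fun_prop

lemma legendreDelta_neg (m φ : ℝ) : legendreDelta m (-φ) = legendreDelta m φ := by
  simp [legendreDelta]

lemma periodic_legendreDelta (m : ℝ) : Function.Periodic (legendreDelta m) (2 * π) := fun φ => by
  simp [legendreDelta]

lemma hasDerivAt_legendreDelta (hm : m < 1) (φ : ℝ) :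
    HasDerivAt (legendreDelta m) (-(m * sin φ * cos φ) / legendreDelta m φ) φ := by
  have hsq := (((hasDerivAt_sin φ).pow 2).const_mul m).const_sub 1
  refine (hsq.sqrt (one_sub_mul_sin_sq_pos hm φ).ne').congr_deriv ?_
  simp only [legendreDelta, Pi.pow_apply]
  field_simp
  push_cast
  ring

lemma Fm_eq_integral (m φ : ℝ) : Fm m φ = ∫ θ in (0 : ℝ)..φ, 1 / legendreDelta m θ := rfl

lemma continuous_one_div_legendreDelta (hm : m < 1) : Continuous fun φ => 1 / legendreDelta m φ :=
  continuous_const.div (continuous_legendreDelta m) fun φ => (legendreDelta_pos hm φ).ne'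

lemma periodic_one_div_legendreDelta (m : ℝ) :
    Function.Periodic (fun φ => 1 / legendreDelta m φ) (2 * π) :=
  (periodic_legendreDelta m).comp (1 / ·)

lemma Fm_zero (m : ℝ) : Fm m 0 = 0 := intervalIntegral.integral_same

lemma Fm_neg (m φ : ℝ) : Fm m (-φ) = -Fm m φ := by
  have h := intervalIntegral.integral_comp_neg (a := 0) (b := φ) fun θ => 1 / legendreDelta m θ
  simp only [legendreDelta_neg, neg_zero] at h
  rw [Fm_eq_integral, Fm_eq_integral, intervalIntegral.integral_symm, h]

lemma Fm_add_two_pi (hm : m < 1) (φ : ℝ) : Fm m (φ + 2 * π) = Fm m φ + snPeriod m := by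
  have hint (a b : ℝ) :=
    (continuous_one_div_legendreDelta hm).intervalIntegrable (μ := MeasureTheory.volume) a b
  have hshift := (periodic_one_div_legendreDelta m).intervalIntegral_add_eq φ 0
  rw [zero_add] at hshift
  rw [snPeriod, Fm_eq_integral, Fm_eq_integral, Fm_eq_integral, ← hshift,
    intervalIntegral.integral_add_adjacent_intervals (hint _ _) (hint _ _)]

lemma hasDerivAt_Fm (hm : m < 1) (φ : ℝ) : HasDerivAt (Fm m) (1 / legendreDelta m φ) φ :=
  ((continuous_one_div_legendreDelta hm).integral_hasStrictDerivAt 0 φ).hasDerivAt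

lemma continuous_Fm (hm : m < 1) : Continuous (Fm m) :=
  continuous_iff_continuousAt.mpr fun φ => (hasDerivAt_Fm hm φ).continuousAt

lemma strictMono_Fm (hm : m < 1) : StrictMono (Fm m) :=
  strictMono_of_hasDerivAt_pos (hasDerivAt_Fm hm) fun φ => one_div_pos.mpr (legendreDelta_pos hm φ)

lemma snPeriod_pos (hm : m < 1) : 0 < snPeriod m := by
  simpa only [snPeriod, Fm_zero] using strictMono_Fm hm two_pi_pos

lemma snFrequency_pos (hm : m < 1) : 0 < snFrequency m := div_pos (snPeriod_pos hm) two_pi_pos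

lemma snFrequency_mul_two_pi (m : ℝ) : snFrequency m * (2 * π) = snPeriod m :=
  div_mul_cancel₀ _ two_pi_pos.ne'

lemma surjective_Fm (hm : m < 1) : Function.Surjective (Fm m) :=
  have hper := periodic_one_div_legendreDelta m
  (continuous_Fm hm).surjective
    (hper.tendsto_atTop_intervalIntegral_of_pos (snPeriod_pos hm) two_pi_pos)
    (hper.tendsto_atBot_intervalIntegral_of_pos (snPeriod_pos hm) two_pi_pos)

lemma Fm_am (hm : m < 1) (t : ℝ) : Fm m (am t m) = t :=
  Function.rightInverse_invFun (surjective_Fm hm) t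

lemma am_Fm (hm : m < 1) (φ : ℝ) : am (Fm m φ) m = φ :=
  Function.leftInverse_invFun (strictMono_Fm hm).injective φ

lemma am_zero (hm : m < 1) : am 0 m = 0 := by
  simpa only [Fm_zero] using am_Fm hm 0

lemma am_neg (hm : m < 1) (t : ℝ) : am (-t) m = -am t m := by
  rw [← am_Fm hm (-am t m), Fm_neg, Fm_am hm]

lemma am_add_snPeriod (hm : m < 1) (t : ℝ) : am (t + snPeriod m) m = am t m + 2 * π := by
  rw [← am_Fm hm (am t m + 2 * π), Fm_add_two_pi hm, Fm_am hm]

lemma strictMono_am (hm : m < 1) : StrictMono fun t => am t m := fun s t hst => by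
  rwa [← (strictMono_Fm hm).lt_iff_lt, Fm_am hm, Fm_am hm]

lemma continuous_am (hm : m < 1) : Continuous fun t => am t m :=
  (strictMono_am hm).monotone.continuous_of_surjective fun φ => ⟨Fm m φ, am_Fm hm φ⟩

lemma hasDerivAt_am (hm : m < 1) (t : ℝ) : HasDerivAt (fun t => am t m) (dn t m) t := by
  have h := (hasDerivAt_Fm hm (am t m)).of_local_left_inverse (continuous_am hm).continuousAt
    (one_div_pos.mpr (legendreDelta_pos hm _)).ne' (Filter.Eventually.of_forall (Fm_am hm))
  rwa [one_div, inv_inv] at h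

lemma integral_comp_am (hm : m < 1) (f : ℝ → ℝ) (a b : ℝ) :
    ∫ t in Fm m a..Fm m b, f (am t m) = ∫ φ in a..b, f φ / legendreDelta m φ := by
  have h := intervalIntegral.integral_comp_mul_deriv_of_deriv_nonneg (a := a) (b := b)
    (g := fun t => f (am t m)) (continuous_Fm hm).continuousOn (fun φ _ => hasDerivAt_Fm hm φ)
    fun φ _ => (one_div_pos.mpr (legendreDelta_pos hm φ)).le
  simpa only [Function.comp_def, am_Fm hm, mul_one_div] using h.symm

lemma sn_eq_sin_am (t m : ℝ) : sn t m = sin (am t m) := rfl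

lemma sn_zero (hm : m < 1) : sn 0 m = 0 := by
  rw [sn_eq_sin_am, am_zero hm, sin_zero]

lemma sn_neg (hm : m < 1) (t : ℝ) : sn (-t) m = -sn t m := by
  rw [sn_eq_sin_am, sn_eq_sin_am, am_neg hm, sin_neg]

lemma cn_sq (t m : ℝ) : cn t m ^ 2 = 1 - sn t m ^ 2 := cos_sq' _

lemma dn_sq (hm : m < 1) (t : ℝ) : dn t m ^ 2 = 1 - m * sn t m ^ 2 := sq_legendreDelta hm _

lemma hasDerivAt_sn (hm : m < 1) (t : ℝ) :
    HasDerivAt (fun t => sn t m) (cn t m * dn t m) t :=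
  (hasDerivAt_am hm t).sin

lemma hasDerivAt_cn (hm : m < 1) (t : ℝ) :
    HasDerivAt (fun t => cn t m) (-sn t m * dn t m) t :=
  (hasDerivAt_am hm t).cos

lemma hasDerivAt_dn (hm : m < 1) (t : ℝ) :
    HasDerivAt (fun t => dn t m) (-(m * sn t m * cn t m)) t :=
  ((hasDerivAt_legendreDelta hm _).comp t (hasDerivAt_am hm t)).congr_deriv
    (div_mul_cancel₀ _ (legendreDelta_pos hm _).ne')

lemma deriv_sn (hm : m < 1) : deriv (fun t => sn t m) = fun t => cn t m * dn t m :=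
  funext fun t => (hasDerivAt_sn hm t).deriv

lemma deriv_deriv_sn (hm : m < 1) (t : ℝ) :
    deriv (deriv fun t => sn t m) t = -(1 + m) * sn t m + 2 * m * sn t m ^ 3 := by
  have h : HasDerivAt (fun t => cn t m * dn t m) _ t :=
    (hasDerivAt_cn hm t).mul (hasDerivAt_dn hm t)
  rw [deriv_sn hm, h.deriv]
  linear_combination (-sn t m) * dn_sq hm t - m * sn t m * cn_sq t m

lemma periodic_sn (hm : m < 1) : Function.Periodic (fun t => sn t m) (snPeriod m) := fun t => by
  simp only [sn_eq_sin_am, am_add_snPeriod hm, sin_add_two_pi]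

-- At a period `q`, `sn` and its derivative `cn * dn` take the same values `0` and `1` as at `0`,
-- so `am q m` is a multiple of `2 * π`.
lemma snPeriod_le_of_periodic_sn (hm : m < 1) {q : ℝ} (hq : 0 < q)
    (hper : Function.Periodic (fun t => sn t m) q) : snPeriod m ≤ q := by
  have hsn : sn q m = 0 := hper.eq.trans (sn_zero hm)
  have hcn : cn q m = 1 := by
    have hderiv : deriv (fun t => sn t m) q = deriv (fun t => sn t m) 0 := by
      have h := deriv_comp_add_const (fun t => sn t m) q 0
      rwa [zero_add, hper.funext, eq_comm] at h
    have hdn {t : ℝ} (ht : sn t m = 0) : dn t m = 1 := by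
      rw [dn, legendreDelta, ← sn_eq_sin_am, ht]
      simp
    simpa [deriv_sn hm, hdn hsn, hdn (sn_zero hm), cn, am_zero hm] using hderiv
  obtain ⟨n, hn⟩ := (cos_eq_one_iff _).mp hcn
  have ham : 0 < am q m := by simpa only [am_zero hm] using strictMono_am hm hq
  have hn_pos : (0 : ℝ) < n := pos_of_mul_pos_left (hn ▸ ham) two_pi_pos.le
  have hn_one : (1 : ℝ) ≤ n := by exact_mod_cast hn_pos
  calc snPeriod m = Fm m (2 * π) := rfl
    _ ≤ Fm m (am q m) :=
      (strictMono_Fm hm).monotone (hn ▸ le_mul_of_one_le_left two_pi_pos.le hn_one)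
    _ = q := Fm_am hm q

lemma snMean_eq_integral_div (hm : m < 1) (k : ℕ) :
    snMean k m = (∫ φ in (0 : ℝ)..2 * π, sin φ ^ k / legendreDelta m φ) / snPeriod m := by
  rw [snMean, ← integral_comp_am hm (sin · ^ k), Fm_zero]
  rfl

lemma continuousOn_integral_div_legendreDelta {f : ℝ → ℝ} (hf : Continuous f) (a b : ℝ) :
    ContinuousOn (fun m => ∫ φ in a..b, f φ / legendreDelta m φ) (Set.Iio 1) := by
  refine continuousOn_iff_continuous_domRestrict.mpr
    (intervalIntegral.continuous_parametric_intervalIntegral_of_continuous' ?_ a b)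
  exact Continuous.div (by fun_prop) (by fun_prop) fun p => (legendreDelta_pos p.1.2 p.2).ne'

lemma continuousOn_snMean (k : ℕ) : ContinuousOn (snMean k) (Set.Iio 1) := by
  refine ContinuousOn.congr ?_ fun m hm => snMean_eq_integral_div hm k
  exact (continuousOn_integral_div_legendreDelta (continuous_sin.pow k) _ _).div
    (continuousOn_integral_div_legendreDelta continuous_const _ _) fun m hm => (snPeriod_pos hm).ne'

lemma snMean_pos_of_even (hm : m < 1) {k : ℕ} (hk : Even k) : 0 < snMean k m := by
  rw [snMean_eq_integral_div hm]
  have hcont : Continuous fun φ => sin φ ^ k / legendreDelta m φ :=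
    (continuous_sin.pow k).div (continuous_legendreDelta m) fun φ => (legendreDelta_pos hm φ).ne'
  refine div_pos (intervalIntegral.integral_pos two_pi_pos hcont.continuousOn
    (fun φ _ => div_nonneg (hk.pow_nonneg _) (legendreDelta_pos hm φ).le)
    ⟨π / 2, ⟨by positivity, by linarith [pi_pos]⟩, ?_⟩) (snPeriod_pos hm)
  simpa using legendreDelta_pos hm (π / 2)

lemma avg_const_mul (c : ℝ) (f : ℝ → ℝ) : avg (fun t => c * f t) = c * avg f := by
  rw [avg, avg, intervalIntegral.integral_const_mul, mul_left_comm]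

lemma avg_comp_mul {T : ℝ} (hT : T ≠ 0) (f : ℝ → ℝ) :
    avg (fun t => f (T / (2 * π) * t)) = (∫ t in (0 : ℝ)..T, f t) / T := by
  have hpi := two_pi_pos.ne'
  rw [avg, intervalIntegral.integral_comp_mul_left _ (div_ne_zero hT hpi), mul_zero,
    div_mul_cancel₀ _ hpi, smul_eq_mul]
  field_simp

lemma avg_mul_sn_pow (hm : m < 1) (V : ℝ) (k : ℕ) :
    avg (fun t => (V * sn (snFrequency m * t) m) ^ k) = V ^ k * snMean k m := by
  simp only [mul_pow]
  rw [avg_const_mul, snFrequency, avg_comp_mul (snPeriod_pos hm).ne' fun t => sn t m ^ k, snMean]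

lemma deriv_deriv_mul_sn (hm : m < 1) (V Ω t : ℝ) :
    deriv (deriv fun t => V * sn (Ω * t) m) t =
      V * Ω ^ 2 * (-(1 + m) * sn (Ω * t) m + 2 * m * sn (Ω * t) m ^ 3) := by
  have hderiv : deriv (fun t => V * sn (Ω * t) m) =
      fun t => V * (Ω * deriv (fun t => sn t m) (Ω * t)) := funext fun t => by
    rw [deriv_const_mul_field, deriv_comp_mul_left Ω fun t => sn t m, smul_eq_mul]
  rw [hderiv, deriv_const_mul_field, deriv_const_mul_field,
    deriv_comp_mul_left Ω (deriv fun t => sn t m), deriv_deriv_sn hm, smul_eq_mul]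
  ring

lemma periodic_mul_sn (hm : m < 1) (V : ℝ) :
    Function.Periodic (fun t => V * sn (snFrequency m * t) m) (2 * π) := by
  have h := ((periodic_sn hm).const_mul (snFrequency m)).comp (V * ·)
  rwa [← snFrequency_mul_two_pi, inv_mul_cancel_left₀ (snFrequency_pos hm).ne'] at h

lemma two_pi_le_of_periodic_mul_sn (hm : m < 1) {V p : ℝ} (hV : V ≠ 0) (hp : 0 < p)
    (hper : Function.Periodic (fun t => V * sn (snFrequency m * t) m) p) : 2 * π ≤ p := by
  have hΩ := snFrequency_pos hm
  have hsn : Function.Periodic (fun t => sn t m) (snFrequency m * p) := by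
    simpa [Function.comp_def, mul_inv_cancel_left₀ hΩ.ne', inv_mul_cancel_left₀ hV] using
      (hper.const_mul (snFrequency m)⁻¹).comp (V⁻¹ * ·)
  refine le_of_mul_le_mul_left ?_ hΩ
  rw [snFrequency_mul_two_pi]
  exact snPeriod_le_of_periodic_sn hm (mul_pos hΩ hp) hsn

lemma exists_parameter_balance :
    ∃ m ∈ Set.Ioo (-1 : ℝ) 0, 1 + m + 6 * m * snMean 2 m = 0 := by
  have hcont : ContinuousOn (fun m => 1 + m + 6 * m * snMean 2 m) (Set.Icc (-1) 0) := by
    have hmean := (continuousOn_snMean 2).mono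
      fun m (hm : m ∈ Set.Icc (-1 : ℝ) 0) => hm.2.trans_lt one_pos
    fun_prop
  have hneg := snMean_pos_of_even (m := -1) (by norm_num) even_two
  exact intermediate_value_Ioo (by norm_num) hcont ⟨by linarith, by norm_num⟩

lemma exists_amplitude_balance (hm : m < 0) :
    ∃ V > 0, V ^ 6 * (snMean 4 m + 3 * snMean 2 m ^ 2) = -2 * m * snFrequency m ^ 2 := by
  have hm₁ : m < 1 := hm.trans one_pos
  have hD : 0 < snMean 4 m + 3 * snMean 2 m ^ 2 :=
    add_pos_of_pos_of_nonneg (snMean_pos_of_even hm₁ (by decide)) (by positivity)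
  have hc : 0 < -2 * m * snFrequency m ^ 2 / (snMean 4 m + 3 * snMean 2 m ^ 2) :=
    div_pos (mul_pos (by linarith) (pow_pos (snFrequency_pos hm₁) 2)) hD
  refine ⟨_, rpow_pos_of_pos hc ((6 : ℕ) : ℝ)⁻¹, ?_⟩
  rw [rpow_inv_natCast_pow hc.le (by norm_num), div_mul_cancel₀ _ hD.ne']

end

theorem stmt_10 :
    ∃ V Ω m : ℝ, 0 < V ∧ 0 < Ω ∧ m ∈ Set.Ioo (-1 : ℝ) 0 ∧
      (∀ t : ℝ, (fun t => V * sn (Ω * t) m) (-t) = -(fun t => V * sn (Ω * t) m) t) ∧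
      Function.Periodic (fun t => V * sn (Ω * t) m) (2 * π) ∧
      (∀ p : ℝ, 0 < p → Function.Periodic (fun t => V * sn (Ω * t) m) p → 2 * π ≤ p) ∧
      (∀ t : ℝ, deriv (deriv (fun t => V * sn (Ω * t) m)) t
          + (avg (fun s => (V * sn (Ω * s) m) ^ 4)
              + 3 * avg (fun s => (V * sn (Ω * s) m) ^ 2) ^ 2)
            * (3 * avg (fun s => (V * sn (Ω * s) m) ^ 2) * (V * sn (Ω * t) m)
              + (V * sn (Ω * t) m) ^ 3) = 0) := by
  obtain ⟨m, hm, hlinear⟩ := exists_parameter_balance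
  have hm₁ : m < 1 := hm.2.trans one_pos
  obtain ⟨V, hV, hcubic⟩ := exists_amplitude_balance hm.2
  refine ⟨V, snFrequency m, m, hV, snFrequency_pos hm₁, hm, fun t => ?_,
    periodic_mul_sn hm₁ V, fun p hp => two_pi_le_of_periodic_mul_sn hm₁ hV.ne' hp, fun t => ?_⟩
  · simp only [mul_neg, sn_neg hm₁]
  · rw [deriv_deriv_mul_sn hm₁, avg_mul_sn_pow hm₁, avg_mul_sn_pow hm₁]
    generalize sn (snFrequency m * t) m = y
    linear_combination
      V * (3 * snMean 2 m * y + y ^ 3) * hcubic - V * snFrequency m ^ 2 * y * hlinear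
end
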